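/- arXiv:2109.00587 — 3 statements merged into one kernel-verified Lean document; each statement's English description precedes it below -/
import Mathlib

section
/- There is exactly one ℂ-linear derivation v : R → R such that A(v) = [[0,0,0],[0,0,−1],[0,0,0]], namely the derivation R_τ determined on generators by v(a) = −2a² + 2at₁ + bc + t₂/3, v(b) = 6a²c − (t₂/2)c − 3ab + 3bt₁, v(c) = ac + ct₁ − b/2, v(t₁) = t₁² − t₂/12, v(t₂) = 4t₁t₂ − 6t₃. -/
/-!
The condition on `A(v)` is a triangular linear system for the values of `v` on the generators.
Write `u = v(t₂)` and `x = Dt₃(v)`.  The entries `(2,3)` and `(3,3)` say `α(v) = -(2/3)Δ` and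
`DΔ(v) = 12 t₁ Δ`; as linear equations in `(u, x)` they have determinant `6Δ`, hence
`u = 4t₁t₂ - 6t₃` and `x = 6t₁t₃ - t₂²/3`.  The entries `(2,1)`, `(3,2)`, `(3,1)` then determine
`v(a)`, `v(t₁)`, `v(c)`, the coefficients being units, and the definition of `Dt₃` determines
`v(b)`.  Since `R` is a domain, this computation may be done in its fraction field
(`system_iff`, transported to `R` by `Amat_eq_iff`).

It remains to know that a derivation of `R` is uniquely determined by its values on the five
generators (`derivation_ext_gen`) and that these values may be prescribed arbitrarily
(`exists_derivation`); the latter holds because `R` is a localization of a polynomial ring, hence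
formally étale over it, so that derivations extend.
-/

open MvPolynomial

noncomputable section

/-- The polynomial ring `ℂ[a,b,c,t₁,t₂]`. -/
abbrev Poly5 := MvPolynomial (Fin 5) ℂ

def aP : Poly5 := X 0
def bP : Poly5 := X 1
def cP : Poly5 := X 2
def t1P : Poly5 := X 3
def t2P : Poly5 := X 4
/-- `t₃ := 4a³ − t₂a − b²`. -/
def t3P : Poly5 := 4 * aP ^ 3 - t2P * aP - bP ^ 2
/-- `Δ := 27t₃² − t₂³`. -/
def ΔP : Poly5 := 27 * t3P ^ 2 - t2P ^ 3

/-- The multiplicative set generated by `a`, `b` and `Δ`. -/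
def Sloc : Submonoid Poly5 := Submonoid.closure {aP, bP, ΔP}

/-- `R` is the localization of `ℂ[a,b,c,t₁,t₂]` at the multiplicative set
generated by `a`, `b` and `Δ`. -/
abbrev Rloc := Localization Sloc

def a : Rloc := algebraMap Poly5 Rloc aP
def b : Rloc := algebraMap Poly5 Rloc bP
def c : Rloc := algebraMap Poly5 Rloc cP
def t1 : Rloc := algebraMap Poly5 Rloc t1P
def t2 : Rloc := algebraMap Poly5 Rloc t2P
def t3 : Rloc := algebraMap Poly5 Rloc t3P
def Δ : Rloc := algebraMap Poly5 Rloc ΔP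

/-- `g₁ := (−2a²t₂² + 3at₂t₃ + 9t₃²)/(4ab)`. -/
def g1 : Rloc := (-2 * a ^ 2 * t2 ^ 2 + 3 * a * t2 * t3 + 9 * t3 ^ 2) * Ring.inverse (4 * a * b)
/-- `g₂ := (18a²t₃ − at₂² − 3t₂t₃)/(2ab)`. -/
def g2 : Rloc := (18 * a ^ 2 * t3 - a * t2 ^ 2 - 3 * t2 * t3) * Ring.inverse (2 * a * b)
/-- `g₃ := (6a²t₂t₃ + (18t₃² − t₂³)a − t₂²t₃)/(8ab)`. -/
def g3 : Rloc :=
  (6 * a ^ 2 * t2 * t3 + (18 * t3 ^ 2 - t2 ^ 3) * a - t2 ^ 2 * t3) * Ring.inverse (8 * a * b)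

/-- `Dt₃(v) := (12a² − t₂)·v(a) − 2b·v(b) − a·v(t₂)`. -/
def Dt3 (v : Derivation ℂ Rloc Rloc) : Rloc :=
  (12 * a ^ 2 - t2) * v a - 2 * b * v b - a * v t2

/-- `α(v) := 3t₃·v(t₂) − 2t₂·Dt₃(v)`. -/
def αv (v : Derivation ℂ Rloc Rloc) : Rloc := 3 * t3 * v t2 - 2 * t2 * Dt3 v

/-- `DΔ(v) := 54t₃·Dt₃(v) − 3t₂²·v(t₂)`. -/
def DΔ (v : Derivation ℂ Rloc Rloc) : Rloc := 54 * t3 * Dt3 v - 3 * t2 ^ 2 * v t2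

/-- The Gauss–Manin connection matrix `A(v)` contracted with the derivation `v`. -/
def Amat (v : Derivation ℂ Rloc Rloc) : Matrix (Fin 3) (Fin 3) Rloc :=
  !![0, 0, 0;
     Ring.inverse Δ * (g1 * v t2 + g2 * Dt3 v
        - (c - b * Ring.inverse (2 * a)) * ((3 / 2 : ℂ) • αv v) - Δ * Ring.inverse b * v a),
     Ring.inverse Δ * (-((3 / 2 : ℂ) • (t1 * αv v)) - (1 / 12 : ℂ) • DΔ v),
     (3 / 2 : ℂ) • (Ring.inverse Δ * αv v);
     Ring.inverse Δ * ((t1 * g1 + g3) * v t2 + (t1 * g2 + g1) * Dt3 v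
        - (a + t1) * Δ * Ring.inverse b * v a
        - (c - b * Ring.inverse (2 * a)) * ((3 / 2 : ℂ) • (t1 * αv v) + (1 / 12 : ℂ) • DΔ v)
        + Δ * v c),
     Ring.inverse Δ * (Δ * v t1 - (1 / 6 : ℂ) • (t1 * DΔ v)
        - ((3 / 2 : ℂ) • t1 ^ 2 + (1 / 8 : ℂ) • t2) * αv v),
     Ring.inverse Δ * ((3 / 2 : ℂ) • (t1 * αv v) + (1 / 12 : ℂ) • DΔ v)]

/-- The linear system given by the entries of the matrix, solved over a field.  The unknowns
`p, q, r, s, u` are the values of the derivation on `a, b, c, t₁, t₂`, while `x` stands for `Dt₃`,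
`al` for `α` and `dd` for `DΔ`. -/
lemma system_iff {K : Type*} [Field K] [CharZero K] (A B C T S W D p q r s u x al dd : K)
    (hA : A ≠ 0) (hB : B ≠ 0) (hD0 : D ≠ 0)
    (hW : W = 4 * A ^ 3 - S * A - B ^ 2) (hD : D = 27 * W ^ 2 - S ^ 3)
    (hx : x = (12 * A ^ 2 - S) * p - 2 * B * q - A * u)
    (hal : al = 3 * W * u - 2 * S * x) (hdd : dd = 54 * W * x - 3 * S ^ 2 * u) :
    (D⁻¹ * ((-2 * A ^ 2 * S ^ 2 + 3 * A * S * W + 9 * W ^ 2) * (4 * A * B)⁻¹ * u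
        + (18 * A ^ 2 * W - A * S ^ 2 - 3 * S * W) * (2 * A * B)⁻¹ * x
        - (C - B * (2 * A)⁻¹) * (3 / 2 * al) - D * B⁻¹ * p) = 0 ∧
      D⁻¹ * (-(3 / 2 * (T * al)) - 1 / 12 * dd) = 0 ∧
      3 / 2 * (D⁻¹ * al) = -1 ∧
      D⁻¹ * ((T * ((-2 * A ^ 2 * S ^ 2 + 3 * A * S * W + 9 * W ^ 2) * (4 * A * B)⁻¹)
            + (6 * A ^ 2 * S * W + (18 * W ^ 2 - S ^ 3) * A - S ^ 2 * W) * (8 * A * B)⁻¹) * u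
        + (T * ((18 * A ^ 2 * W - A * S ^ 2 - 3 * S * W) * (2 * A * B)⁻¹)
            + (-2 * A ^ 2 * S ^ 2 + 3 * A * S * W + 9 * W ^ 2) * (4 * A * B)⁻¹) * x
        - (A + T) * D * B⁻¹ * p
        - (C - B * (2 * A)⁻¹) * (3 / 2 * (T * al) + 1 / 12 * dd) + D * r) = 0 ∧
      D⁻¹ * (D * s - 1 / 6 * (T * dd) - (3 / 2 * T ^ 2 + 1 / 8 * S) * al) = 0 ∧
      D⁻¹ * (3 / 2 * (T * al) + 1 / 12 * dd) = 0) ↔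
    (p = -2 * A ^ 2 + 2 * A * T + B * C + 1 / 3 * S ∧
      q = 6 * A ^ 2 * C - 1 / 2 * (S * C) - 3 * A * B + 3 * B * T ∧
      r = A * C + C * T - 1 / 2 * B ∧
      s = T ^ 2 - 1 / 12 * S ∧
      u = 4 * T * S - 6 * W) := by
  -- Once `u` and `x` are known, the two remaining long entries vanish at the claimed solution.
  have key21 : (-2 * A ^ 2 * S ^ 2 + 3 * A * S * W + 9 * W ^ 2) * (4 * A * B)⁻¹
        * (4 * T * S - 6 * W)
      + (18 * A ^ 2 * W - A * S ^ 2 - 3 * S * W) * (2 * A * B)⁻¹ * (6 * T * W - S ^ 2 / 3)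
      - (C - B * (2 * A)⁻¹) * (3 / 2 * (-2 / 3 * D))
      - D * B⁻¹ * (-2 * A ^ 2 + 2 * A * T + B * C + 1 / 3 * S) = 0 := by
    subst hD hW
    field_simp
    ring
  have key31 : (T * ((-2 * A ^ 2 * S ^ 2 + 3 * A * S * W + 9 * W ^ 2) * (4 * A * B)⁻¹)
        + (6 * A ^ 2 * S * W + (18 * W ^ 2 - S ^ 3) * A - S ^ 2 * W) * (8 * A * B)⁻¹)
        * (4 * T * S - 6 * W)
      + (T * ((18 * A ^ 2 * W - A * S ^ 2 - 3 * S * W) * (2 * A * B)⁻¹)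
        + (-2 * A ^ 2 * S ^ 2 + 3 * A * S * W + 9 * W ^ 2) * (4 * A * B)⁻¹)
        * (6 * T * W - S ^ 2 / 3)
      - (A + T) * D * B⁻¹ * (-2 * A ^ 2 + 2 * A * T + B * C + 1 / 3 * S)
      - (C - B * (2 * A)⁻¹) * (3 / 2 * (T * (-2 / 3 * D)) + 1 / 12 * (12 * T * D))
      + D * (A * C + C * T - 1 / 2 * B) = 0 := by
    subst hD hW
    field_simp
    ring
  have hDi : D⁻¹ ≠ 0 := inv_ne_zero hD0
  constructor
  · rintro ⟨h21, -, h23, h31, h32, h33⟩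
    replace h21 := (mul_eq_zero.1 h21).resolve_left hDi
    replace h31 := (mul_eq_zero.1 h31).resolve_left hDi
    replace h32 := (mul_eq_zero.1 h32).resolve_left hDi
    replace h33 := (mul_eq_zero.1 h33).resolve_left hDi
    have e1 : al = -2 / 3 * D := by
      field_simp at h23
      linear_combination h23 / 3
    have e2 : dd = 12 * T * D := by
      linear_combination 12 * h33 - 18 * T * e1
    have eu : u = 4 * T * S - 6 * W := by
      apply mul_left_cancel₀ hD0
      linear_combination u * hD + 9 * W * e1 - 9 * W * hal + S / 3 * e2 - S / 3 * hdd
    have ex : x = 6 * T * W - S ^ 2 / 3 := by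
      apply mul_left_cancel₀ hD0
      linear_combination x * hD + S ^ 2 / 2 * e1 - S ^ 2 / 2 * hal + W / 2 * e2 - W / 2 * hdd
    rw [eu, ex, e1] at h21
    rw [eu, ex, e1, e2] at h31
    have ep : p = -2 * A ^ 2 + 2 * A * T + B * C + 1 / 3 * S := by
      apply mul_left_cancel₀ (mul_ne_zero hD0 (inv_ne_zero hB))
      linear_combination key21 - h21
    refine ⟨ep, ?_, ?_, ?_, eu⟩
    · apply mul_left_cancel₀ (mul_ne_zero two_ne_zero hB)
      rw [ep, eu, ex] at hx
      rw [hW] at hx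
      linear_combination hx
    · apply mul_left_cancel₀ hD0
      rw [ep] at h31
      linear_combination h31 - key31
    · apply mul_left_cancel₀ hD0
      linear_combination h32 + T / 6 * e2 + (3 / 2 * T ^ 2 + 1 / 8 * S) * e1
  · rintro ⟨rfl, rfl, rfl, rfl, rfl⟩
    have ex : x = 6 * T * W - S ^ 2 / 3 := by
      rw [hx, hW]; ring
    have e1 : al = -2 / 3 * D := by
      rw [hal, ex, hD]; ring
    have e2 : dd = 12 * T * D := by
      rw [hdd, ex, hD]; ring
    refine ⟨?_, ?_, ?_, ?_, ?_, ?_⟩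
    · rw [ex, e1, key21, mul_zero]
    · rw [e1, e2]; ring
    · rw [e1]; field_simp
    · rw [ex, e1, e2, key31, mul_zero]
    · rw [e1, e2]; ring
    · rw [e1, e2]; ring

lemma ΔP_ne_zero : ΔP ≠ 0 := by
  intro h
  have h2 := congrArg (MvPolynomial.eval (![0, 1, 0, 0, 0] : Fin 5 → ℂ)) h
  simp [ΔP, t3P, aP, bP, t2P] at h2

lemma Sloc_le : Sloc ≤ nonZeroDivisors Poly5 := by
  refine Submonoid.closure_le.2 ?_
  rintro y (rfl | rfl | rfl)
  · exact mem_nonZeroDivisors_of_ne_zero (X_ne_zero 0)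
  · exact mem_nonZeroDivisors_of_ne_zero (X_ne_zero 1)
  · exact mem_nonZeroDivisors_of_ne_zero ΔP_ne_zero

instance : IsDomain Rloc := IsLocalization.isDomain_localization Sloc_le

lemma isUnit_a : IsUnit a :=
  IsLocalization.map_units Rloc (⟨aP, Submonoid.subset_closure (by simp)⟩ : Sloc)

lemma isUnit_b : IsUnit b :=
  IsLocalization.map_units Rloc (⟨bP, Submonoid.subset_closure (by simp)⟩ : Sloc)

lemma isUnit_Δ : IsUnit Δ :=
  IsLocalization.map_units Rloc (⟨ΔP, Submonoid.subset_closure (by simp)⟩ : Sloc)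

lemma isUnit_ofNat (n : ℕ) [n.AtLeastTwo] : IsUnit (OfNat.ofNat n : Rloc) := by
  have h : IsUnit (OfNat.ofNat n : ℂ) := (OfNat.ofNat_ne_zero n).isUnit
  have h2 := h.map (algebraMap ℂ Rloc)
  rwa [map_ofNat] at h2

lemma t3_eq : t3 = 4 * a ^ 3 - t2 * a - b ^ 2 := by
  simp only [t3, t3P, a, b, t2, map_sub, map_mul, map_pow, map_ofNat]

lemma Δ_eq : Δ = 27 * t3 ^ 2 - t2 ^ 3 := by
  simp only [Δ, ΔP, t3, t2, map_sub, map_mul, map_pow, map_ofNat]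

lemma map_inverse_of_isUnit {A K : Type*} [CommRing A] [Field K] (f : A →+* K) {y : A}
    (hy : IsUnit y) : f (Ring.inverse y) = (f y)⁻¹ := by
  refine eq_inv_of_mul_eq_one_left ?_
  rw [← map_mul, Ring.inverse_mul_cancel y hy, map_one]

lemma Amat_eq_iff (v : Derivation ℂ Rloc Rloc) :
    Amat v = !![0, 0, 0; 0, 0, -1; 0, 0, 0] ↔
      (v a = -2 * a ^ 2 + 2 * a * t1 + b * c + (1 / 3 : ℂ) • t2 ∧
       v b = 6 * a ^ 2 * c - (1 / 2 : ℂ) • (t2 * c) - 3 * a * b + 3 * b * t1 ∧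
       v c = a * c + c * t1 - (1 / 2 : ℂ) • b ∧
       v t1 = t1 ^ 2 - (1 / 12 : ℂ) • t2 ∧
       v t2 = 4 * t1 * t2 - 6 * t3) := by
  let φ : Rloc →+* FractionRing Rloc := algebraMap Rloc (FractionRing Rloc)
  have hφ : Function.Injective φ := IsFractionRing.injective Rloc (FractionRing Rloc)
  have hsmul (z : ℂ) (y : Rloc) : φ (z • y) = (φ.comp (algebraMap ℂ Rloc)) z * φ y := by
    rw [Algebra.smul_def, map_mul]; rfl
  have : CharZero (FractionRing Rloc) :=
    charZero_of_injective_ringHom (φ.comp (algebraMap ℂ Rloc)).injective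
  have i1 : φ (Ring.inverse Δ) = (φ Δ)⁻¹ := map_inverse_of_isUnit φ isUnit_Δ
  have i2 : φ (Ring.inverse b) = (φ b)⁻¹ := map_inverse_of_isUnit φ isUnit_b
  have i3 : φ (Ring.inverse (2 * a)) = (2 * φ a)⁻¹ := by
    rw [map_inverse_of_isUnit φ ((isUnit_ofNat 2).mul isUnit_a)]
    simp only [map_mul, map_ofNat]
  have i4 : φ (Ring.inverse (2 * a * b)) = (2 * φ a * φ b)⁻¹ := by
    rw [map_inverse_of_isUnit φ (((isUnit_ofNat 2).mul isUnit_a).mul isUnit_b)]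
    simp only [map_mul, map_ofNat]
  have i5 : φ (Ring.inverse (4 * a * b)) = (4 * φ a * φ b)⁻¹ := by
    rw [map_inverse_of_isUnit φ (((isUnit_ofNat 4).mul isUnit_a).mul isUnit_b)]
    simp only [map_mul, map_ofNat]
  have i6 : φ (Ring.inverse (8 * a * b)) = (8 * φ a * φ b)⁻¹ := by
    rw [map_inverse_of_isUnit φ (((isUnit_ofNat 8).mul isUnit_a).mul isUnit_b)]
    simp only [map_mul, map_ofNat]
  have key := system_iff (φ a) (φ b) (φ c) (φ t1) (φ t2) (φ t3) (φ Δ)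
    (φ (v a)) (φ (v b)) (φ (v c)) (φ (v t1)) (φ (v t2)) (φ (Dt3 v)) (φ (αv v)) (φ (DΔ v))
    (isUnit_a.map φ).ne_zero (isUnit_b.map φ).ne_zero (isUnit_Δ.map φ).ne_zero
    (by rw [t3_eq]; simp only [map_sub, map_mul, map_pow, map_ofNat])
    (by rw [Δ_eq]; simp only [map_sub, map_mul, map_pow, map_ofNat])
    (by simp only [Dt3, map_sub, map_mul, map_pow, map_ofNat])
    (by simp only [αv, map_sub, map_mul, map_ofNat])
    (by simp only [DΔ, map_sub, map_mul, map_pow, map_ofNat])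
  have hmat : Amat v = !![0, 0, 0; 0, 0, -1; 0, 0, 0] ↔
      Amat v 1 0 = 0 ∧ Amat v 1 1 = 0 ∧ Amat v 1 2 = -1 ∧
      Amat v 2 0 = 0 ∧ Amat v 2 1 = 0 ∧ Amat v 2 2 = 0 := by
    constructor
    · intro h
      rw [h]
      simp
    · rintro ⟨h1, h2, h3, h4, h5, h6⟩
      ext i j
      fin_cases i <;> fin_cases j <;> first | rfl | assumption
  rw [hmat]
  simp only [← hφ.eq_iff]
  simp only [Amat, g1, g2, g3, Matrix.of_apply, Matrix.cons_val, map_add, map_sub, map_mul,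
    map_neg, map_pow, map_one, map_zero, map_ofNat, hsmul, map_div₀, i1, i2, i3, i4, i5, i6]
  exact key

/-- A derivation of the localization is determined by its values on the five variables. -/
lemma derivation_ext_gen {v w : Derivation ℂ Rloc Rloc} (ha : v a = w a) (hb : v b = w b)
    (hc : v c = w c) (h1 : v t1 = w t1) (h2 : v t2 = w t2) : v = w := by
  have hP : v.compAlgebraMap Poly5 = w.compAlgebraMap Poly5 := by
    refine MvPolynomial.derivation_ext fun i => ?_
    fin_cases i
    exacts [ha, hb, hc, h1, h2]
  have hP' (y : Poly5) : v (algebraMap Poly5 Rloc y) = w (algebraMap Poly5 Rloc y) :=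
    DFunLike.congr_fun hP y
  ext z
  obtain ⟨⟨n, d⟩, hz⟩ := IsLocalization.surj Sloc z
  -- Apply both derivations to `z * d = n` and cancel the unit `d`.
  have hv := congrArg v hz
  have hw := congrArg w hz
  simp only [Derivation.leibniz, hP', smul_eq_mul] at hv hw
  exact (IsLocalization.map_units Rloc d).mul_left_cancel
    (add_left_cancel (hv.trans hw.symm))

/-- Derivations of `ℂ[a,b,c,t₁,t₂]` with values in the localization extend to the localization,
because localizations are formally étale. -/
lemma exists_derivation (f : Fin 5 → Rloc) :
    ∃ v : Derivation ℂ Rloc Rloc, ∀ i, v (algebraMap Poly5 Rloc (X i)) = f i := by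
  have : Algebra.FormallyEtale Poly5 Rloc := .of_isLocalization Sloc
  let D : Derivation ℂ Poly5 Rloc := mkDerivation ℂ f
  let e := KaehlerDifferential.tensorKaehlerEquivOfFormallyEtale ℂ Poly5 Rloc
  refine ⟨((D.liftKaehlerDifferential.liftBaseChange Rloc).comp e.symm.toLinearMap).compDer
    (KaehlerDifferential.D ℂ Rloc), fun i => ?_⟩
  have h := KaehlerDifferential.tensorKaehlerEquivOfFormallyEtale_symm_D_algebraMap
    ℂ Poly5 Rloc (X i)
  change D.liftKaehlerDifferential.liftBaseChange Rloc
    (e.symm (KaehlerDifferential.D ℂ Rloc (algebraMap Poly5 Rloc (X i)))) = f i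
  rw [h]
  simp [D]

/-- There is exactly one ℂ-linear derivation `v : R → R` with
`A(v) = [[0,0,0],[0,0,−1],[0,0,0]]`, namely the modular vector field `R_τ` determined on
generators by the displayed values. -/
theorem statement3 :
    (∃! v : Derivation ℂ Rloc Rloc, Amat v = !![0, 0, 0; 0, 0, -1; 0, 0, 0]) ∧
    (∀ v : Derivation ℂ Rloc Rloc, Amat v = !![0, 0, 0; 0, 0, -1; 0, 0, 0] →
      (v a = -2 * a ^ 2 + 2 * a * t1 + b * c + (1 / 3 : ℂ) • t2 ∧
       v b = 6 * a ^ 2 * c - (1 / 2 : ℂ) • (t2 * c) - 3 * a * b + 3 * b * t1 ∧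
       v c = a * c + c * t1 - (1 / 2 : ℂ) • b ∧
       v t1 = t1 ^ 2 - (1 / 12 : ℂ) • t2 ∧
       v t2 = 4 * t1 * t2 - 6 * t3)) := by
  refine ⟨?_, fun v hv => (Amat_eq_iff v).1 hv⟩
  obtain ⟨v, hv⟩ := exists_derivation
    ![-2 * a ^ 2 + 2 * a * t1 + b * c + (1 / 3 : ℂ) • t2,
      6 * a ^ 2 * c - (1 / 2 : ℂ) • (t2 * c) - 3 * a * b + 3 * b * t1,
      a * c + c * t1 - (1 / 2 : ℂ) • b,
      t1 ^ 2 - (1 / 12 : ℂ) • t2,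
      4 * t1 * t2 - 6 * t3]
  have hvA := (Amat_eq_iff v).2 ⟨hv 0, hv 1, hv 2, hv 3, hv 4⟩
  refine ⟨v, hvA, fun w hw => ?_⟩
  obtain ⟨wa, wb, wc, w1, w2⟩ := (Amat_eq_iff w).1 hw
  exact derivation_ext_gen (wa.trans (hv 0).symm) (wb.trans (hv 1).symm) (wc.trans (hv 2).symm)
    (w1.trans (hv 3).symm) (w2.trans (hv 4).symm)

end
end

section
/- Let τ, z, λ, μ, α, β, γ, δ ∈ ℂ with αδ − βγ = 1 and γτ + δ ≠ 0, and set R := (λδ − μγ − zγ)/(γτ + δ). Then the following identity of 3×3 complex matrices holds: [[1,λ,μ],[0,α,β],[0,γ,δ]] · [[−1,z,0],[0,τ,−1],[0,1,0]] = [[−1,(z+λτ+μ)/(γτ+δ),0],[0,(ατ+β)/(γτ+δ),−1],[0,1,0]] · [[1,0,R],[0,γτ+δ,−γ],[0,0,(γτ+δ)⁻¹]]. -/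
open Matrix

/-- The key matrix factorization underlying the modular transformation behavior of quasi
Jacobi forms of index zero. -/
theorem statement10 (τ z lam μ α β γ δ : ℂ) (hdet : α * δ - β * γ = 1)
    (hne : γ * τ + δ ≠ 0) :
    !![1, lam, μ; 0, α, β; 0, γ, δ] * !![-1, z, 0; 0, τ, -1; 0, 1, 0] =
      !![-1, (z + lam * τ + μ) / (γ * τ + δ), 0;
         0, (α * τ + β) / (γ * τ + δ), -1;
         0, 1, 0] *
      !![1, 0, (lam * δ - μ * γ - z * γ) / (γ * τ + δ);
         0, γ * τ + δ, -γ;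
         0, 0, (γ * τ + δ)⁻¹] := by
  have h02 : -lam = -((lam * δ - μ * γ - z * γ) / (γ * τ + δ)) +
      (z + lam * τ + μ) / (γ * τ + δ) * -γ := by
    field_simp
    ring
  -- The only entry that uses the determinant condition.
  have h12 : -α = (α * τ + β) / (γ * τ + δ) * -γ + -(γ * τ + δ)⁻¹ := by
    rw [show (α * τ + β) / (γ * τ + δ) * -γ + -(γ * τ + δ)⁻¹ =
      -((α * τ + β) * γ + 1) / (γ * τ + δ) by ring, eq_div_iff hne]
    linear_combination -hdet
  ext i j
  fin_cases i <;> fin_cases j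
  all_goals simp [Matrix.mul_apply, Fin.sum_univ_three, hne]
  · linear_combination h02
  · linear_combination h12
end

section
/- Let G₁ be the group of complex 3×3 matrices g(k,k',v) := [[1,0,v],[0,k,k'],[0,0,k⁻¹]] with k ∈ ℂ*, k' ∈ ℂ, v ∈ ℂ, under matrix multiplication, and let T := {(a,b,c,t₁,t₂) ∈ ℂ⁵ : Δ ≠ 0} where t₃ := 4a³ − t₂a − b² and Δ := 27t₃² − t₂³. Define t • g(k,k',v) := (k⁻²a, k⁻³b, v + k⁻¹c, k⁻¹k' + k⁻²t₁, k⁻⁴t₂) for t = (a,b,c,t₁,t₂). Then: (1) for all t ∈ ℂ⁵, Δ evaluated at t • g(k,k',v) equals k⁻¹²·Δ evaluated at t, so the formula maps T to T; (2) the formula defines a right group action of G₁ on T, i.e. t • g(1,0,0) = t and t • (g₁·g₂) = (t • g₁) • g₂ for all g₁, g₂ ∈ G₁ and t ∈ T. -/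
/-!
`Δ` is weighted homogeneous of degree 12, which gives `delta_act` and hence stability of `T`.
For the action law, `gMat_mul` computes the product of two elements of `G₁` and `gMat_inj` recovers
the parameters from the matrix; substituting them leaves five rational identities in `k₁`, `k₂`.
-/

open Matrix

noncomputable section

/-- The element `g(k,k',v) = [[1,0,v],[0,k,k'],[0,0,k⁻¹]]` of the group `G₁`. -/
def gMat (k : ℂˣ) (k' v : ℂ) : Matrix (Fin 3) (Fin 3) ℂ :=
  !![1, 0, v; 0, (k : ℂ), k'; 0, 0, (k : ℂ)⁻¹]

/-- `t₃ := 4a³ − t₂a − b²` as a function of `t = (a,b,c,t₁,t₂)`. -/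
def t3f (p : ℂ × ℂ × ℂ × ℂ × ℂ) : ℂ :=
  4 * p.1 ^ 3 - p.2.2.2.2 * p.1 - p.2.1 ^ 2

/-- `Δ := 27t₃² − t₂³` as a function of `t = (a,b,c,t₁,t₂)`. -/
def Δf (p : ℂ × ℂ × ℂ × ℂ × ℂ) : ℂ := 27 * t3f p ^ 2 - p.2.2.2.2 ^ 3

/-- The moduli space `T = {(a,b,c,t₁,t₂) ∈ ℂ⁵ : Δ ≠ 0}`. -/
def Tset : Set (ℂ × ℂ × ℂ × ℂ × ℂ) := {p | Δf p ≠ 0}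

/-- The action `t • g(k,k',v) := (k⁻²a, k⁻³b, v + k⁻¹c, k⁻¹k' + k⁻²t₁, k⁻⁴t₂)`. -/
def act (p : ℂ × ℂ × ℂ × ℂ × ℂ) (k : ℂˣ) (k' v : ℂ) : ℂ × ℂ × ℂ × ℂ × ℂ :=
  (((k : ℂ))⁻¹ ^ 2 * p.1, ((k : ℂ))⁻¹ ^ 3 * p.2.1, v + ((k : ℂ))⁻¹ * p.2.2.1,
    ((k : ℂ))⁻¹ * k' + ((k : ℂ))⁻¹ ^ 2 * p.2.2.2.1, ((k : ℂ))⁻¹ ^ 4 * p.2.2.2.2)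

/-- `Δ` is weighted homogeneous of degree 12 for the weights 2, 3, 4 of `a`, `b`, `t₂`, so no
invertibility of `k⁻¹` is needed. -/
theorem delta_act (p : ℂ × ℂ × ℂ × ℂ × ℂ) (k : ℂˣ) (k' v : ℂ) :
    Δf (act p k k' v) = ((k : ℂ))⁻¹ ^ 12 * Δf p := by
  simp only [Δf, t3f, act]
  ring

/-- The group law of `G₁` in coordinates:
`g(k₁,k₁',v₁) g(k₂,k₂',v₂) = g(k₁k₂, k₁k₂' + k₁'k₂⁻¹, v₂ + v₁k₂⁻¹)`. -/
theorem gMat_mul (k₁ k₂ : ℂˣ) (k₁' k₂' v₁ v₂ : ℂ) :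
    gMat k₁ k₁' v₁ * gMat k₂ k₂' v₂ =
      gMat (k₁ * k₂) (k₁ * k₂' + k₁' * (k₂ : ℂ)⁻¹) (v₂ + v₁ * (k₂ : ℂ)⁻¹) := by
  ext i j
  fin_cases i <;> fin_cases j <;>
    simp [gMat, Matrix.mul_apply, Fin.sum_univ_three, mul_comm]

/-- The matrix determines its parameters, so the action is well defined on `G₁`. -/
theorem gMat_inj {k l : ℂˣ} {k' l' v w : ℂ} (h : gMat k k' v = gMat l l' w) :
    k = l ∧ k' = l' ∧ v = w := by
  have h1 := congrFun (congrFun h 1) 1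
  have h2 := congrFun (congrFun h 1) 2
  have h3 := congrFun (congrFun h 0) 2
  simp [gMat] at h1 h2 h3
  exact ⟨Units.ext h1, h2, h3⟩

/-- `Δ(t • g) = k⁻¹²·Δ(t)`, so the formula maps `T` to `T`, and the formula defines a right
group action of `G₁` on `T`. -/
theorem statement14 :
    (∀ (p : ℂ × ℂ × ℂ × ℂ × ℂ) (k : ℂˣ) (k' v : ℂ),
      Δf (act p k k' v) = ((k : ℂ))⁻¹ ^ 12 * Δf p) ∧
    (∀ p ∈ Tset, ∀ (k : ℂˣ) (k' v : ℂ), act p k k' v ∈ Tset) ∧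
    (∀ p : ℂ × ℂ × ℂ × ℂ × ℂ, act p 1 0 0 = p) ∧
    (∀ (k₁ k₂ : ℂˣ) (k₁' k₂' v₁ v₂ : ℂ), ∃ (k₃ : ℂˣ) (k₃' v₃ : ℂ),
      gMat k₁ k₁' v₁ * gMat k₂ k₂' v₂ = gMat k₃ k₃' v₃) ∧
    (∀ (k₁ k₂ k₃ : ℂˣ) (k₁' k₂' k₃' v₁ v₂ v₃ : ℂ) (p : ℂ × ℂ × ℂ × ℂ × ℂ),
      p ∈ Tset →
      gMat k₁ k₁' v₁ * gMat k₂ k₂' v₂ = gMat k₃ k₃' v₃ →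
      act p k₃ k₃' v₃ = act (act p k₁ k₁' v₁) k₂ k₂' v₂) := by
  refine ⟨delta_act, ?_, ?_, ?_, ?_⟩
  · intro p hp k k' v
    change Δf _ ≠ 0
    rw [delta_act]
    exact mul_ne_zero (pow_ne_zero _ (inv_ne_zero k.ne_zero)) hp
  · intro p
    simp [act]
  · intro k₁ k₂ k₁' k₂' v₁ v₂
    exact ⟨_, _, _, gMat_mul k₁ k₂ k₁' k₂' v₁ v₂⟩
  · intro k₁ k₂ k₃ k₁' k₂' k₃' v₁ v₂ v₃ p _ h
    rw [gMat_mul] at h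
    obtain ⟨rfl, rfl, rfl⟩ := gMat_inj h
    have h1 : (k₁ : ℂ) ≠ 0 := k₁.ne_zero
    have h2 : (k₂ : ℂ) ≠ 0 := k₂.ne_zero
    simp only [act, Units.val_mul, Prod.mk.injEq]
    refine ⟨?_, ?_, ?_, ?_, ?_⟩ <;> field_simp <;> ring


end
end
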